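/- Let α ∈ A¹ be non-coordinate, let β ∈ A¹ satisfy the resonance condition for (α,β) at every branch of every point of S, and let π : C → C′ be a surjection. Say that β is π-proportional to α if for every class i′ ∈ C′ there exists λ_{i′} ∈ k with β_i = λ_{i′}·α_i for all i ∈ π^{-1}(i′). If β is π-proportional to α and W is p-transversal at some P ∈ S with respect to (α,π), with π(φ_P(Δ_P)) = {i′,j′}, then λ_{i′} = λ_{j′}; consequently β is π′-proportional to α, where π′ is the surjection obtained from π by the reduction step identifying i′ and j′. -/

import Mathlib

/-!
Let `δ` be the branch over the class of `c₀` that witnesses transversality, and let `i = φ δ`.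
Regrouped by branches, the resonance condition at `δ` reads
`∑ δ', μ(δ,δ') (β_i α_{φ δ'} - α_i β_{φ δ'}) = 0`. If `β` is `l₀ α` on the class of `c₀` and `l₁ α`
on the class of `c₁`, the branches over the class of `c₀` contribute nothing, and the others
contribute `(l₀ - l₁) α_i T` with `T ≠ 0` the transversality sum. As `α_i ≠ 0`, this gives
`l₀ = l₁`.

The factors of proportionality form a function `l` on the set of classes with `β = (l ∘ π) α`.
Merging composes `π` with a self-map of the set of classes that moves only the class of `c₁`, to
that of `c₀`; as `l` agrees on these two classes, composing it with this self-map does not change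
it, and `β` stays proportional to `α` over the merged classes.
-/

open scoped Classical

/-- The weak combinatorial type of a plane projective curve. -/
structure WeakComb (p : ℕ) where
  /-- the set of irreducible components -/
  C : Type
  [fintypeC : Fintype C]
  [decEqC : DecidableEq C]
  [nonemptyC : Nonempty C]
  /-- the set of singular points -/
  S : Type
  [fintypeS : Fintype S]
  [decEqS : DecidableEq S]
  /-- the local branches at each singular point -/
  Δ : S → Type
  [fintypeΔ : ∀ P, Fintype (Δ P)]
  [decEqΔ : ∀ P, DecidableEq (Δ P)]
  /-- each branch belongs to a component -/
  φ : ∀ P, Δ P → C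
  /-- local intersection multiplicities of pairs of branches -/
  μ : ∀ P, Δ P → Δ P → ℕ
  μ_symm : ∀ P δ δ', φ P δ ≠ φ P δ' → μ P δ δ' = μ P δ' δ
  μ_pos : ∀ P δ δ', φ P δ ≠ φ P δ' → 0 < μ P δ δ'

attribute [instance] WeakComb.fintypeC WeakComb.decEqC WeakComb.nonemptyC
attribute [instance] WeakComb.fintypeS WeakComb.decEqS WeakComb.fintypeΔ WeakComb.decEqΔ

namespace WeakComb

variable {p : ℕ} (W : WeakComb p)

/-- μ_P(δ,δ') with the convention that it vanishes on pairs of branches of the same component. -/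
def muk (P : W.S) (δ δ' : W.Δ P) : ℕ :=
  if W.φ P δ = W.φ P δ' then 0 else W.μ P δ δ'

/-- μ_P(δ, j): the multiplicity of intersection of the branch δ with the component j. -/
def muC (P : W.S) (δ : W.Δ P) (j : W.C) : ℕ :=
  ∑ δ' : W.Δ P, if W.φ P δ' = j then W.muk P δ δ' else 0

/-- A degree assignment: positive degrees satisfying the Bezout condition. -/
def IsDegree (d : W.C → ℕ) : Prop :=
  (∀ i, 0 < d i) ∧
  ∀ i j, i ≠ j →
    d i * d j = ∑ P : W.S, ∑ δ : W.Δ P, if W.φ P δ = i then W.muC P δ j else 0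

/-- The basis vector σ_i of A¹ = (C → ZMod p). -/
noncomputable def sigma (i : W.C) : W.C → ZMod p := Pi.single i 1

/-- The basis vector ψ_P^δ of A_P = (Δ_P → ZMod p). -/
noncomputable def psi (P : W.S) (δ : W.Δ P) : W.Δ P → ZMod p := Pi.single δ 1

/-- ψ_P^δ ∧ ψ_P^δ' as an element of Λ² A_P. -/
noncomputable def psiW (P : W.S) (δ δ' : W.Δ P) : ⋀[ZMod p]^2 (W.Δ P → ZMod p) :=
  ⟨ExteriorAlgebra.ιMulti (ZMod p) 2 ![W.psi P δ, W.psi P δ'],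
   ExteriorAlgebra.ιMulti_range (ZMod p) 2 (Set.mem_range_self _)⟩

/-- The subspace I_P of Λ² A_P. -/
noncomputable def IP (P : W.S) : Submodule (ZMod p) (⋀[ZMod p]^2 (W.Δ P → ZMod p)) :=
  Submodule.span (ZMod p)
    ({x | ∃ δ1 δ2 δ3 : W.Δ P, x = W.psiW P δ1 δ2 + W.psiW P δ2 δ3 + W.psiW P δ3 δ1} ∪
     {x | (∀ δ δ' : W.Δ P, W.φ P δ = W.φ P δ') ∧ ∃ δ1 δ2 : W.Δ P, x = W.psiW P δ1 δ2})

/-- The degree-two part A² = A^{2,0} ⊕ A^{2,∞} of the Combinatorial Aomoto algebra. -/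
abbrev A2 (d : W.C → ℕ) : Type :=
  ((P : W.S) → (⋀[ZMod p]^2 (W.Δ P → ZMod p)) ⧸ W.IP P) ×
  ({i : W.C // p ∣ d i} → ZMod p)

/-- The wedge product A¹ × A¹ → A², extending σ_i ∧ σ_j bilinearly. -/
noncomputable def wedge (d : W.C → ℕ) (α β : W.C → ZMod p) : W.A2 d :=
  (fun P => ∑ δ : W.Δ P, ∑ δ' : W.Δ P,
      (α (W.φ P δ) * β (W.φ P δ') * (W.muk P δ δ' : ZMod p)) •
        Submodule.Quotient.mk (W.psiW P δ δ'),
   fun i => α i.1 * (∑ j : W.C, (d j : ZMod p) * β j)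
          - β i.1 * (∑ j : W.C, (d j : ZMod p) * α j))

/-- The linear map ·∧α : A¹ → A², β ↦ β ∧ α. -/
noncomputable def wedgeL (d : W.C → ℕ) (α : W.C → ZMod p) :
    (W.C → ZMod p) →ₗ[ZMod p] W.A2 d where
  toFun β := W.wedge d β α
  map_add' β γ := by
    refine Prod.ext ?_ ?_
    · funext P
      simp only [wedge, Pi.add_apply, Prod.fst_add]
      rw [← Finset.sum_add_distrib]
      refine Finset.sum_congr rfl fun δ _ => ?_
      rw [← Finset.sum_add_distrib]
      refine Finset.sum_congr rfl fun δ' _ => ?_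
      rw [← add_smul, add_mul, add_mul]
    · funext i
      simp only [wedge, Pi.add_apply, Prod.snd_add]
      rw [show (∑ x : W.C, (d x : ZMod p) * (β x + γ x))
            = (∑ x : W.C, (d x : ZMod p) * β x) + ∑ x : W.C, (d x : ZMod p) * γ x by
        rw [← Finset.sum_add_distrib]; exact Finset.sum_congr rfl fun x _ => by ring]
      ring
  map_smul' c β := by
    refine Prod.ext ?_ ?_
    · funext P
      simp only [wedge, Pi.smul_apply, smul_eq_mul, RingHom.id_apply, Prod.smul_fst]
      rw [Finset.smul_sum]
      refine Finset.sum_congr rfl fun δ _ => ?_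
      rw [Finset.smul_sum]
      refine Finset.sum_congr rfl fun δ' _ => ?_
      rw [smul_smul]
      ring_nf
    · funext i
      simp only [wedge, Pi.smul_apply, smul_eq_mul, RingHom.id_apply, Prod.smul_snd]
      rw [show (∑ x : W.C, (d x : ZMod p) * (c * β x)) = c * ∑ x : W.C, (d x : ZMod p) * β x by
        rw [Finset.mul_sum]; exact Finset.sum_congr rfl fun x _ => by ring]
      ring

/-- The kernel of ·∧α : A¹ → A². -/
noncomputable def wedgeKer (d : W.C → ℕ) (α : W.C → ZMod p) :
    Submodule (ZMod p) (W.C → ZMod p) :=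
  LinearMap.ker (W.wedgeL d α)

/-- H¹ of the Combinatorial Aomoto complex with differential ·∧α. -/
noncomputable abbrev H1 (d : W.C → ℕ) (α : W.C → ZMod p) :=
  (W.wedgeKer d α) ⧸
    (Submodule.comap (W.wedgeKer d α).subtype (Submodule.span (ZMod p) {α}))

end WeakComb

namespace WeakComb

variable {p : ℕ} (W : WeakComb p)

/-- The resonance condition for (α,β) at the branch δ of the point P. -/
def ResCond (α β : W.C → ZMod p) (P : W.S) (δ : W.Δ P) : Prop :=
  β (W.φ P δ) * (∑ j : W.C, (W.muC P δ j : ZMod p) * α j)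
    - α (W.φ P δ) * (∑ j : W.C, (W.muC P δ j : ZMod p) * β j) = 0

/-- P is a p-transversal point for the pair of components i ≠ j. -/
def PTransPoint (P : W.S) (i j : W.C) : Prop :=
  i ≠ j ∧ (∀ δ : W.Δ P, W.φ P δ = i ∨ W.φ P δ = j) ∧
  (∃ δ : W.Δ P, W.φ P δ = i) ∧ (∃ δ : W.Δ P, W.φ P δ = j) ∧
  ((∃ δ : W.Δ P, W.φ P δ = i ∧ ((W.muC P δ j : ZMod p) ≠ 0)) ∨
   (∃ δ : W.Δ P, W.φ P δ = j ∧ ((W.muC P δ i : ZMod p) ≠ 0)))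

/-- The components i and j are p-transversal at a point. -/
def PTransComponents (i j : W.C) : Prop := ∃ P : W.S, W.PTransPoint P i j

/-- α is non-coordinate if all its coordinates are nonzero. -/
def NonCoordinate (α : W.C → ZMod p) : Prop := ∀ i, α i ≠ 0

end WeakComb

/-- The setoid (partition) obtained from s by merging the classes of c₀ and c₁. -/
def mergeSetoid {α : Type*} (s : Setoid α) (c₀ c₁ : α) : Setoid α :=
  Relation.EqvGen.setoid (fun a b => s.r a b ∨ (a = c₀ ∧ b = c₁))

namespace WeakComb

variable {p : ℕ} (W : WeakComb p)

/-- W is p-transversal at P with respect to (α, π), where the surjection π is encoded by the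
setoid s of its fibres; the two classes π(φ_P(Δ_P)) = {i',j'} are those of c₀ and c₁. -/
def PTransversalAt (α : W.C → ZMod p) (s : Setoid W.C) (P : W.S) (c₀ c₁ : W.C) : Prop :=
  ¬ s.r c₀ c₁ ∧
  (∀ δ : W.Δ P, s.r (W.φ P δ) c₀ ∨ s.r (W.φ P δ) c₁) ∧
  (∃ δ : W.Δ P, s.r (W.φ P δ) c₀) ∧ (∃ δ : W.Δ P, s.r (W.φ P δ) c₁) ∧
  ∃ δ : W.Δ P, s.r (W.φ P δ) c₀ ∧
    (∑ δ' : W.Δ P, if s.r (W.φ P δ') c₁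
        then (W.muk P δ δ' : ZMod p) * α (W.φ P δ') else 0) ≠ 0

/-- A p-reduction step with respect to α. -/
def RedStep (α : W.C → ZMod p) (s s' : Setoid W.C) : Prop :=
  ∃ (P : W.S) (c₀ c₁ : W.C), W.PTransversalAt α s P c₀ c₁ ∧ s' = mergeSetoid s c₀ c₁

/-- W is completely p-reductive with respect to α: starting from the identity partition (⊥),
some finite sequence of p-reduction steps reaches the one-class partition (⊤). -/
def CompletelyPReductive (α : W.C → ZMod p) : Prop :=
  Relation.ReflTransGen (W.RedStep α) ⊥ ⊤

/-- β is π-proportional to α, for the surjection π encoded by the setoid s: on each class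
of s, β is a scalar multiple of α. -/
def Proportional (s : Setoid W.C) (α β : W.C → ZMod p) : Prop :=
  ∀ c : W.C, ∃ l : ZMod p, ∀ c', s.r c c' → β c' = l * α c'

end WeakComb

/-- A combinatorial quasi-fiber structure of rank r on W. -/
structure QuasiFiber {p : ℕ} (W : WeakComb p) (r : ℕ) where
  /-- which quasi-fiber each component belongs to -/
  g : W.C → Fin r
  g_surj : Function.Surjective g
  /-- multiplicities of components inside the quasi-fibers -/
  m : W.C → ℕ
  m_pos : ∀ c, 0 < m c
  /-- the set of base points -/
  B : Set W.S
  fiber_off_base : ∀ P : W.S, P ∉ B → ∀ δ δ' : W.Δ P, g (W.φ P δ) = g (W.φ P δ')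

namespace WeakComb

variable {p : ℕ} (W : WeakComb p) {r : ℕ}

/-- M_s(δ) for a branch δ at a base point P. -/
noncomputable def Mcoef (F : QuasiFiber W r) (P : W.S) (δ : W.Δ P) (s : Fin r) : ZMod p :=
  ∑ δ' : W.Δ P,
    if W.φ P δ' ≠ W.φ P δ ∧ F.g (W.φ P δ') = s
      then ((F.m (W.φ P δ') * W.μ P δ δ' : ℕ) : ZMod p) else 0

/-- ω_a = Σ_c m_c · a_{g(c)} · σ_c ∈ A¹. -/
noncomputable def omega (F : QuasiFiber W r) (a : Fin r → ZMod p) : W.C → ZMod p :=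
  fun c => (F.m c : ZMod p) * a (F.g c)

/-- The restricted combinatorics W°_s of the quasi-fiber s. -/
noncomputable def restrict (F : QuasiFiber W r) (s : Fin r) : WeakComb p where
  C := {c : W.C // F.g c = s}
  fintypeC := Fintype.ofFinite _
  decEqC := inferInstance
  nonemptyC := by obtain ⟨c, hc⟩ := F.g_surj s; exact ⟨⟨c, hc⟩⟩
  S := {P : W.S // Nonempty (W.Δ P) ∧ ∀ δ : W.Δ P, F.g (W.φ P δ) = s}
  fintypeS := Fintype.ofFinite _
  decEqS := inferInstance
  Δ := fun P => W.Δ P.1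
  fintypeΔ := fun P => inferInstance
  decEqΔ := fun P => inferInstance
  φ := fun P δ => ⟨W.φ P.1 δ, P.2.2 δ⟩
  μ := fun P δ δ' => W.μ P.1 δ δ'
  μ_symm := fun P δ δ' h => W.μ_symm P.1 δ δ' (fun e => h (Subtype.ext e))
  μ_pos := fun P δ δ' h => W.μ_pos P.1 δ δ' (fun e => h (Subtype.ext e))

/-- The restriction ω_a|_s of ω_a to the restricted combinatorics W°_s. -/
noncomputable def omegaRes (F : QuasiFiber W r) (a : Fin r → ZMod p) (s : Fin r) :
    (W.restrict F s).C → ZMod p :=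
  fun c => (F.m c.1 : ZMod p) * a s

end WeakComb

section Statements

open WeakComb

variable {p : ℕ} [Fact p.Prime]

theorem mergeSetoid_eq_ker {ι : Type*} (s : Setoid ι) (c₀ c₁ : ι) :
    mergeSetoid s c₀ c₁ =
      Setoid.ker (Function.update id (⟦c₁⟧ : Quotient s) ⟦c₀⟧ ∘ Quotient.mk s) := by
  apply le_antisymm
  · refine Setoid.eqvGen_le ?_
    rintro a b (hab | ⟨rfl, rfl⟩)
    · exact congrArg (Function.update id _ _) (Quotient.sound hab)
    · simp [Setoid.ker_def, Function.update_apply]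
  · have of_mk_eq {a b : ι} (h : (⟦a⟧ : Quotient s) = ⟦b⟧) : mergeSetoid s c₀ c₁ a b :=
      .rel a b (.inl (Quotient.exact h))
    have merged : mergeSetoid s c₀ c₁ c₀ c₁ := .rel c₀ c₁ (.inr ⟨rfl, rfl⟩)
    intro a b hab
    simp only [Setoid.ker_def, Function.comp_apply, Function.update_apply, id_eq] at hab
    split_ifs at hab with ha hb hb
    · exact of_mk_eq (ha.trans hb.symm)
    · exact Setoid.trans' _ (of_mk_eq ha) (Setoid.trans' _ (Setoid.symm' _ merged) (of_mk_eq hab))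
    · exact Setoid.trans' _ (of_mk_eq hab) (Setoid.trans' _ merged (of_mk_eq hb.symm))
    · exact of_mk_eq hab

namespace WeakComb

section Resonance

theorem sum_muC_mul {R : Type*} [NonAssocSemiring R] {n : ℕ} (W : WeakComb n) (P : W.S)
    (δ : W.Δ P) (γ : W.C → R) :
    ∑ j, (W.muC P δ j : R) * γ j = ∑ δ', (W.muk P δ δ' : R) * γ (W.φ P δ') := by
  simp only [muC, Nat.cast_sum, Nat.cast_ite, Nat.cast_zero, Finset.sum_mul, ite_mul, zero_mul]
  rw [Finset.sum_comm]
  simp only [Finset.sum_ite_eq, Finset.mem_univ, if_true]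

variable {n : ℕ} {W : WeakComb n} {α β : W.C → ZMod n} {P : W.S} {δ : W.Δ P}

theorem resCond_iff_sum_eq_zero :
    W.ResCond α β P δ ↔
      ∑ δ', (W.muk P δ δ' : ZMod n) *
        (β (W.φ P δ) * α (W.φ P δ') - α (W.φ P δ) * β (W.φ P δ')) = 0 := by
  simp only [ResCond, sum_muC_mul, Finset.mul_sum, mul_sub, Finset.sum_sub_distrib,
    mul_left_comm]

variable {s : Setoid W.C} {c₀ c₁ : W.C} {l₀ l₁ : ZMod n}

theorem ResCond.sub_mul_sum_eq_zero (hres : W.ResCond α β P δ)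
    (hcover : ∀ δ', s.r (W.φ P δ') c₀ ∨ s.r (W.φ P δ') c₁) (hδ : s.r (W.φ P δ) c₀)
    (h₀ : ∀ c, s.r c₀ c → β c = l₀ * α c) (h₁ : ∀ c, s.r c₁ c → β c = l₁ * α c) :
    (l₀ - l₁) * (α (W.φ P δ) * ∑ δ', if s.r (W.φ P δ') c₁
      then (W.muk P δ δ' : ZMod n) * α (W.φ P δ') else 0) = 0 := by
  refine Eq.trans ?_ (resCond_iff_sum_eq_zero.mp hres)
  rw [Finset.mul_sum, Finset.mul_sum]
  refine Finset.sum_congr rfl fun δ' _ => ?_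
  have hβδ : β (W.φ P δ) = l₀ * α (W.φ P δ) := h₀ _ (s.symm hδ)
  split_ifs with hδ'
  · have hβδ' : β (W.φ P δ') = l₁ * α (W.φ P δ') := h₁ _ (s.symm hδ')
    rw [hβδ, hβδ']
    ring
  · have hβδ' : β (W.φ P δ') = l₀ * α (W.φ P δ') :=
      h₀ _ (s.symm ((hcover δ').resolve_right hδ'))
    rw [hβδ, hβδ']
    ring

theorem PTransversalAt.factor_eq [NoZeroDivisors (ZMod n)] (ht : W.PTransversalAt α s P c₀ c₁)
    (hα : ∀ δ, s.r (W.φ P δ) c₀ → α (W.φ P δ) ≠ 0)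
    (hres : ∀ δ, s.r (W.φ P δ) c₀ → W.ResCond α β P δ)
    (h₀ : ∀ c, s.r c₀ c → β c = l₀ * α c) (h₁ : ∀ c, s.r c₁ c → β c = l₁ * α c) :
    l₀ = l₁ := by
  obtain ⟨-, hcover, -, -, δ, hδ, hsum⟩ := ht
  have hzero := (hres δ hδ).sub_mul_sum_eq_zero hcover hδ h₀ h₁
  exact sub_eq_zero.mp ((mul_eq_zero.mp hzero).resolve_right (mul_ne_zero (hα δ hδ) hsum))

end Resonance

section Proportional

variable {n : ℕ} {W : WeakComb n} {α β : W.C → ZMod n}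

theorem proportional_ker_iff {ι : Type*} {π : W.C → ι} :
    W.Proportional (Setoid.ker π) α β ↔ ∃ l : ι → ZMod n, ∀ c, β c = l (π c) * α c := by
  constructor
  · intro h
    choose l hl using h
    refine ⟨fun i => if hi : ∃ c, π c = i then l hi.choose else 0, fun c => ?_⟩
    have hc : ∃ c', π c' = π c := ⟨c, rfl⟩
    simpa only [dif_pos hc] using hl hc.choose c hc.choose_spec
  · rintro ⟨l, hl⟩ c
    refine ⟨l (π c), fun c' hc => ?_⟩
    rw [hl c', Setoid.ker_def.mp hc]

theorem Proportional.merge {s : Setoid W.C} {c₀ c₁ : W.C} (hprop : W.Proportional s α β)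
    (hfactor : ∀ l₀ l₁ : ZMod n, (∀ c, s.r c₀ c → β c = l₀ * α c) →
      (∀ c, s.r c₁ c → β c = l₁ * α c) → l₀ = l₁) :
    W.Proportional (mergeSetoid s c₀ c₁) α β := by
  obtain ⟨l, hl⟩ : ∃ l : Quotient s → ZMod n, ∀ c, β c = l ⟦c⟧ * α c := by
    rwa [← proportional_ker_iff, Setoid.ker_mk_eq]
  have factor_of_class (c c' : W.C) (h : s.r c c') : β c' = l ⟦c⟧ * α c' := by
    rw [hl c', Quotient.sound h]
  have hl₀₁ : l ⟦c₀⟧ = l ⟦c₁⟧ := hfactor _ _ (factor_of_class c₀) (factor_of_class c₁)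
  have hl_update : l ∘ Function.update id ⟦c₁⟧ ⟦c₀⟧ = l := by
    rw [Function.comp_update, Function.comp_id, hl₀₁, Function.update_eq_self]
  rw [mergeSetoid_eq_ker, proportional_ker_iff]
  exact ⟨l, fun c => (hl c).trans (congrArg (· * α c) (congrFun hl_update ⟦c⟧).symm)⟩

end Proportional

end WeakComb

theorem stmt7_general {n : ℕ} [NoZeroDivisors (ZMod n)] (W : WeakComb n) (α β : W.C → ZMod n)
    (s : Setoid W.C) (hprop : W.Proportional s α β) (P : W.S) (c₀ c₁ : W.C)
    (ht : W.PTransversalAt α s P c₀ c₁)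
    (hα : ∀ δ, s.r (W.φ P δ) c₀ → α (W.φ P δ) ≠ 0)
    (hres : ∀ δ, s.r (W.φ P δ) c₀ → W.ResCond α β P δ) :
    (∀ l₀ l₁ : ZMod n,
      (∀ c, s.r c₀ c → β c = l₀ * α c) →
      (∀ c, s.r c₁ c → β c = l₁ * α c) → l₀ = l₁) ∧
    W.Proportional (mergeSetoid s c₀ c₁) α β :=
  ⟨fun _ _ => ht.factor_eq hα hres, hprop.merge fun _ _ => ht.factor_eq hα hres⟩

/-- inductive step in the proof of Proposition `completelypreductive`. -/
theorem stmt7 (W : WeakComb p)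
    (α : W.C → ZMod p) (hnc : W.NonCoordinate α)
    (β : W.C → ZMod p) (hres : ∀ (P : W.S) (δ : W.Δ P), W.ResCond α β P δ)
    (s : Setoid W.C) (hprop : W.Proportional s α β)
    (P : W.S) (c₀ c₁ : W.C) (ht : W.PTransversalAt α s P c₀ c₁) :
    (∀ l₀ l₁ : ZMod p,
      (∀ c, s.r c₀ c → β c = l₀ * α c) →
      (∀ c, s.r c₁ c → β c = l₁ * α c) → l₀ = l₁) ∧
    W.Proportional (mergeSetoid s c₀ c₁) α β :=
  stmt7_general W α β s hprop P c₀ c₁ ht (fun δ _ => hnc (W.φ P δ)) (fun δ _ => hres P δ)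

end Statements
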